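/- Let n ≥ 5 be odd and let G be a connected well-covered unicyclic graph of order n. Then G ⪯ M_n. -/

import Mathlib

open Polynomial SimpleGraph

/-- A finset of vertices is independent: pairwise nonadjacent. -/
def IsIndepFinset {V : Type*} (G : SimpleGraph V) (s : Finset V) : Prop :=
  ∀ u ∈ s, ∀ v ∈ s, ¬ G.Adj u v

open Classical in
/-- The independence polynomial of a finite graph, with real coefficients. -/
noncomputable def indepPoly {V : Type*} [Fintype V] (G : SimpleGraph V) : Polynomial ℝ :=
  ∑ s : Finset V, if IsIndepFinset G s then (X : Polynomial ℝ) ^ s.card else 0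

/-- `xi G` : the largest real root of the independence polynomial of `G`. -/
noncomputable def xi {V : Type*} [Fintype V] (G : SimpleGraph V) : ℝ :=
  sSup {x : ℝ | (indepPoly G).eval x = 0}

/-- `Pre H G` (`H ⪯ G`) : `I(H,x) ≥ I(G,x)` for all `x ∈ [ξ(G), 0]`. -/
def Pre {V W : Type*} [Fintype V] [Fintype W] (H : SimpleGraph W) (G : SimpleGraph V) : Prop :=
  ∀ x ∈ Set.Icc (xi G) 0, (indepPoly G).eval x ≤ (indepPoly H).eval x

/-- `SPre H G` (`H ≺ G`). -/
def SPre {V W : Type*} [Fintype V] [Fintype W] (H : SimpleGraph W) (G : SimpleGraph V) : Prop :=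
  Pre H G ∧ indepPoly H ≠ indepPoly G

open Classical in
/-- A graph is well-covered if all maximal independent sets have the same size. -/
def WellCovered {V : Type*} (G : SimpleGraph V) : Prop :=
  ∀ s t : Finset V,
    IsIndepFinset G s → (∀ v ∉ s, ¬ IsIndepFinset G (insert v s)) →
    IsIndepFinset G t → (∀ v ∉ t, ¬ IsIndepFinset G (insert v t)) →
    s.card = t.card

/-- A connected unicyclic graph: connected with as many edges as vertices. -/
def Unicyclic {V : Type*} [Fintype V] (G : SimpleGraph V) : Prop :=
  G.Connected ∧ G.edgeSet.ncard = Fintype.card V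

/-- The graph star (corona with `K₁`) of `G`: each vertex `inl v` gets a pendant
vertex `inr v`. -/
def corona {V : Type*} (G : SimpleGraph V) : SimpleGraph (V ⊕ V) :=
  SimpleGraph.fromRel (fun a b =>
    match a, b with
    | Sum.inl u, Sum.inl v => G.Adj u v
    | Sum.inl u, Sum.inr v => u = v
    | _, _ => False)

/-- `Ugraph n` (`U_n`, `n ≥ 3`): a triangle `0,1,2` with `n - 3` pendant vertices attached
to vertex `0`. -/
def Ugraph (n : ℕ) : SimpleGraph (Fin n) :=
  SimpleGraph.fromRel (fun i j => i.val = 0 ∨ (i.val = 1 ∧ j.val = 2))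

/-- `Dgraph n` (`D_n`, `n ≥ 4`): a path `0,1,...,n-1` plus the chord `{0,2}`, i.e. a
triangle with a path on `n - 3` vertices attached. -/
def Dgraph (n : ℕ) : SimpleGraph (Fin n) :=
  SimpleGraph.fromRel (fun i j => j.val = i.val + 1 ∨ (i.val = 0 ∧ j.val = 2))

/-- `starGraph n` (`S_n = K_{1,n-1}`): vertex `0` adjacent to all other vertices. -/
def starGraph (n : ℕ) : SimpleGraph (Fin n) :=
  SimpleGraph.fromRel (fun i _ => i.val = 0)

/-- `Mgraph n` (`M_n`, odd `n ≥ 5`): a triangle `0,1,2` with `(n-3)/2` paths of length two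
attached at vertex `0`; the middle vertices are the odd indices `3,5,...,n-2` and the leaf
attached to middle vertex `i` is `i + 1`. -/
def Mgraph (n : ℕ) : SimpleGraph (Fin n) :=
  SimpleGraph.fromRel (fun i j =>
    (i.val = 0 ∧ (j.val ≤ 2 ∨ j.val % 2 = 1)) ∨ (i.val = 1 ∧ j.val = 2) ∨
    (i.val % 2 = 1 ∧ 3 ≤ i.val ∧ j.val = i.val + 1))

/-- `SPgraph g k ℓ` (`G(g,k,ℓ)`, for `g ∈ {3,5}` and `k + ℓ ≥ 1`): a cycle on the vertices
`0,...,g-1`, a copy of `P_k*` on the vertices `g,...,g+2k-1` (path vertices at even offsets,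
each followed by its pendant vertex) joined to the cycle vertex `0` by an edge to the
path end `g`, and a copy of `P_ℓ*` on the vertices `g+2k,...,g+2k+2ℓ-1` joined to the cycle
vertex `2` by an edge to the path end `g+2k`. -/
def SPgraph (g k ℓ : ℕ) : SimpleGraph (Fin (g + 2*k + 2*ℓ)) :=
  SimpleGraph.fromRel (fun i j =>
    (i.val < g ∧ j.val < g ∧ (j.val = i.val + 1 ∨ (i.val = 0 ∧ j.val = g - 1))) ∨
    (i.val = 0 ∧ 0 < k ∧ j.val = g) ∨
    (g ≤ i.val ∧ i.val < g + 2*k ∧ (i.val - g) % 2 = 0 ∧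
      (j.val = i.val + 1 ∨ (j.val = i.val + 2 ∧ j.val < g + 2*k))) ∨
    (i.val = 2 ∧ 0 < ℓ ∧ j.val = g + 2*k) ∨
    (g + 2*k ≤ i.val ∧ (i.val - (g + 2*k)) % 2 = 0 ∧
      (j.val = i.val + 1 ∨ j.val = i.val + 2)))

/-- `Gtree n` (`G_{2n}`, `n ≥ 5`): the tree on `2n` vertices with path `v_1 … v_n` at
indices `0,…,n-1`, `z_1` at index `n`, `y_1, y_2` at `n+1, n+2`, `x_1, x_2` at `n+3, n+4`
(with `v_3 z_1`, `v_3 y_1`, `y_1 y_2`, `v_5 x_1`, `x_1 x_2` edges), and pendant vertices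
`w_j` at index `n + j - 1` attached to `v_j` for `6 ≤ j ≤ n`. -/
def Gtree (n : ℕ) : SimpleGraph (Fin (2*n)) :=
  SimpleGraph.fromRel (fun a b =>
    (a.val + 1 = b.val ∧ b.val < n) ∨
    (a.val = 2 ∧ (b.val = n ∨ b.val = n + 1)) ∨
    (a.val = n + 1 ∧ b.val = n + 2) ∨
    (a.val = 4 ∧ b.val = n + 3) ∨
    (a.val = n + 3 ∧ b.val = n + 4) ∨
    (5 ≤ a.val ∧ a.val < n ∧ b.val = n + a.val))

/-!
A graph is quasi-regularizable when `|T| ≤ |N(T)|` for every independent set `T`; well-covered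
graphs without isolated vertices have this property. A quasi-regularizable unicyclic graph `G` of
odd order is either a cycle or arises from a smaller graph `H` of the same kind by attaching a path
of length two at a vertex `u`. In the second case `I(G) = (1 + x) I(H) + x I(H - u)`, while
`I(M_{n+2}) = (1 + x) I(M_n) + x (1 + 2x)^m` for `n = 2m + 1`.

For `x ≤ 0` the inequality `I(M_n) ≤ I(H)` therefore passes to `G` as soon as
`I(H - u) ≤ (1 + 2x)^m`. Propagating this bound to the deletion of the new vertices requires in turn
`(1 + x) I(H) ≤ (1 + 2x)^(m+1)`, and the three inequalities together are stable under attachment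
at each `x > ξ(M_n)`: the first makes `I(H)` positive on `[x, 0]`, so the polynomials of all induced
subgraphs of `H` are positive there and decrease when vertices are added. On cycles, the three
inequalities follow from linear recursions, which stay positive for `x ≥ -1/4`; this covers
`x > ξ(M_n)` as soon as `n ≥ 7`.
-/

/-! ### Independence polynomials of induced subgraphs -/

section IndepSum

open Finset

variable {V W : Type*} {G : SimpleGraph V} {H : SimpleGraph W} {x : ℝ}

open Classical in
/-- The value at `x` of the independence polynomial of the subgraph of `G` induced by `S`. -/
noncomputable def indepSum (G : SimpleGraph V) (S : Finset V) (x : ℝ) : ℝ :=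
  ∑ T ∈ S.powerset with IsIndepFinset G T, x ^ #T

/-- Positivity on `[x, 0]`; for `p = I(G)` and `x ≤ 0` this says that `ξ(G) < x`. -/
def PosOn (p : ℝ → ℝ) (x : ℝ) : Prop :=
  ∀ y ∈ Set.Icc x 0, 0 < p y

theorem PosOn.mono {p : ℝ → ℝ} {y : ℝ} (h : PosOn p x) (hxy : x ≤ y) : PosOn p y :=
  fun z hz => h z ⟨hxy.trans hz.1, hz.2⟩

theorem eval_indepPoly [Fintype V] (G : SimpleGraph V) (x : ℝ) :
    (indepPoly G).eval x = indepSum G univ x := by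
  rw [indepPoly, indepSum, eval_finsetSum, powerset_univ, sum_filter]
  refine sum_congr rfl fun T _ => ?_
  split_ifs <;> simp

theorem continuous_indepSum (G : SimpleGraph V) (S : Finset V) : Continuous (indepSum G S) :=
  continuous_finsetSum _ fun _ _ => by fun_prop

@[simp]
theorem indepSum_empty : indepSum G ∅ x = 1 := by
  rw [indepSum, powerset_empty, filter_singleton, if_pos (by simp [IsIndepFinset])]
  simp

theorem isIndepFinset_map (f : H ↪g G) (T : Finset W) :
    IsIndepFinset G (T.map f.toEmbedding) ↔ IsIndepFinset H T := by
  simp [IsIndepFinset]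

theorem indepSum_map (f : H ↪g G) (S : Finset W) (x : ℝ) :
    indepSum G (S.map f.toEmbedding) x = indepSum H S x := by
  symm
  refine sum_nbij (·.map f.toEmbedding) ?_ (Finset.map_injective _).injOn ?_
    fun T _ => by rw [card_map]
  · intro T hT
    simpa [isIndepFinset_map] using hT
  · intro T hT
    simp only [coe_filter, mem_powerset, Set.mem_ofPred_eq] at hT
    obtain ⟨T, hTS, rfl⟩ := subset_map_iff.1 hT.1
    exact ⟨T, by simpa [hTS] using (isIndepFinset_map f T).1 hT.2, rfl⟩

theorem isIndepFinset_insert [DecidableEq V] {v : V} {T : Finset V} :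
    IsIndepFinset G (insert v T) ↔ (∀ w ∈ T, ¬ G.Adj v w) ∧ IsIndepFinset G T := by
  simp only [IsIndepFinset, mem_insert, forall_eq_or_imp, G.irrefl, not_false_eq_true, true_and,
    G.adj_comm _ v]
  grind

theorem indepSum_insert [DecidableEq V] {S T : Finset V} {v : V} (hv : v ∉ S)
    (hT : ∀ w, w ∈ T ↔ w ∈ S ∧ ¬ G.Adj v w) (x : ℝ) :
    indepSum G (insert v S) x = indepSum G S x + x * indepSum G T x := by
  classical
  have hfilter : {A ∈ S.powerset | IsIndepFinset G (insert v A)}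
      = {A ∈ T.powerset | IsIndepFinset G A} := by
    ext A
    simp only [mem_filter, mem_powerset, isIndepFinset_insert, subset_iff, hT]
    grind
  simp only [indepSum, sum_filter, sum_powerset_insert hv, mul_sum]
  rw [add_right_inj, ← sum_filter, hfilter, sum_filter]
  refine sum_congr rfl fun A hA => ?_
  have hvA : v ∉ A := fun h => hv ((hT v).1 (mem_powerset.1 hA h)).1
  split_ifs <;> simp [card_insert_of_notMem hvA, pow_succ']

theorem indepSum_at_zero (G : SimpleGraph V) (S : Finset V) : indepSum G S 0 = 1 := by
  classical
  induction S using Finset.induction_on with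
  | empty => exact indepSum_empty
  | insert v S hv ih =>
    rw [indepSum_insert hv (T := {w ∈ S | ¬ G.Adj v w}) (fun _ => mem_filter), ih, zero_mul,
      add_zero]

theorem indepSum_anti {A B : Finset V} (hx : x ≤ 0) (hB : ∀ T ⊆ B, 0 ≤ indepSum G T x)
    (hAB : A ⊆ B) : indepSum G B x ≤ indepSum G A x := by
  classical
  induction B using Finset.strongInduction with
  | H B ih =>
    obtain rfl | hne := eq_or_ne A B
    · rfl
    obtain ⟨v, hvB, hvA⟩ := exists_of_ssubset (hAB.ssubset_of_ne hne)
    have hsub := erase_subset v B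
    have hrec := indepSum_insert (G := G) (notMem_erase v B) (fun w => mem_filter) x
    rw [insert_erase hvB] at hrec
    calc indepSum G B x ≤ indepSum G (B.erase v) x := by
          rw [hrec, add_le_iff_nonpos_right]
          exact mul_nonpos_of_nonpos_of_nonneg hx (hB _ ((filter_subset _ _).trans hsub))
      _ ≤ indepSum G A x :=
          ih _ (erase_ssubset hvB) (fun T hT => hB T (hT.trans hsub)) (subset_erase.2 ⟨hAB, hvA⟩)

/-- At the last point `z` of `[x, 0]` where some `I(T)`, `T ⊆ S`, fails to be positive, all of them
are nonnegative by continuity, so that `I(S, z) ≤ I(T, z) ≤ 0` by monotonicity. -/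
theorem PosOn.indepSum_subset {S T : Finset V} (hS : PosOn (indepSum G S) x) (hT : T ⊆ S) :
    PosOn (indepSum G T) x := by
  by_contra hneg
  let Z : Set ℝ := Set.Icc x 0 ∩ ⋃ A ∈ S.powerset, {y | indepSum G A y ≤ 0}
  have hcompact : IsCompact Z := isCompact_Icc.inter_right <| isClosed_biUnion_finset fun A _ =>
    isClosed_le (continuous_indepSum G A) continuous_const
  have hmem {y : ℝ} : y ∈ Z ↔ y ∈ Set.Icc x 0 ∧ ∃ A ⊆ S, indepSum G A y ≤ 0 := by simp [Z]
  obtain ⟨z, hzZ, hmax⟩ : ∃ z, IsGreatest Z z := by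
    refine hcompact.exists_isGreatest ?_
    simp only [PosOn, not_forall, not_lt] at hneg
    obtain ⟨y, hy, hTy⟩ := hneg
    exact ⟨y, hmem.2 ⟨hy, T, hT, hTy⟩⟩
  obtain ⟨hz, A, hAS, hA⟩ := hmem.1 hzZ
  have hz0 : z < 0 := by
    refine lt_of_le_of_ne hz.2 fun h => ?_
    rw [h, indepSum_at_zero] at hA
    exact absurd hA (by norm_num)
  have hnonneg (B) (hB : B ⊆ S) : 0 ≤ indepSum G B z := by
    refine ge_of_tendsto ((continuous_indepSum G B).continuousWithinAt (s := Set.Ioi z)) ?_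
    filter_upwards [Ioc_mem_nhdsGT hz0] with t ht
    by_contra! hBt
    exact ht.1.not_ge (hmax (hmem.2 ⟨⟨hz.1.trans ht.1.le, ht.2⟩, B, hB, hBt.le⟩))
  exact (hS z hz).not_ge ((indepSum_anti hz0.le hnonneg hAS).trans hA)

theorem posOn_of_xi_lt [Fintype V] (hx : xi G < x) : PosOn (fun y => (indepPoly G).eval y) x := by
  have hzero : (indepPoly G).eval 0 = 1 := by rw [eval_indepPoly, indepSum_at_zero]
  have hfinite : {y : ℝ | (indepPoly G).eval y = 0}.Finite :=
    Polynomial.finite_setOfPred_isRoot fun h => by simp [h] at hzero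
  intro y hy
  by_contra! hneg
  obtain ⟨z, hz, hroot⟩ := intermediate_value_Icc hy.2 (indepPoly G).continuous.continuousOn
    ⟨hneg, hzero.symm ▸ zero_le_one⟩
  exact (hx.trans_le (hy.1.trans hz.1)).not_ge (le_csSup hfinite.bddAbove hroot)

/-- The endpoint `ξ(G)` itself is reached by continuity. -/
theorem pre_of_forall_posOn [Fintype V] [Fintype W] (h : ∀ y ≤ 0,
      PosOn (fun z => (indepPoly G).eval z) y → (indepPoly G).eval y ≤ (indepPoly H).eval y) :
    Pre H G := by
  rintro y ⟨hxi, hy⟩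
  have hlt (z) (hz : xi G < z) (hz0 : z ≤ 0) := h z hz0 (posOn_of_xi_lt hz)
  obtain rfl | hy0 := hy.eq_or_lt
  · simp only [eval_indepPoly, indepSum_at_zero, le_refl]
  refine le_of_tendsto_of_tendsto
    ((indepPoly G).continuous.continuousWithinAt (s := Set.Ioi y))
    ((indepPoly H).continuous.continuousWithinAt (s := Set.Ioi y)) ?_
  filter_upwards [Ioc_mem_nhdsGT hy0] with z hz
  exact hlt z (hxi.trans_lt hz.1) hz.2

end IndepSum

/-! ### The polynomials of paths, cycles and `M_n` -/

section Recursions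

variable {x : ℝ}

/-- The value at `x` of the independence polynomial of the path on `k` vertices. -/
def pathIndep (x : ℝ) : ℕ → ℝ
  | 0 => 1
  | 1 => 1 + x
  | k + 2 => pathIndep x (k + 1) + x * pathIndep x k

/-- The value at `x` of the independence polynomial of the cycle on `k ≥ 3` vertices, extended to
`k < 3` by the same recursion. -/
def cycleIndep (x : ℝ) : ℕ → ℝ
  | 0 => 2
  | 1 => 1
  | k + 2 => cycleIndep x (k + 1) + x * cycleIndep x k

/-- The value at `x` of the independence polynomial of `M_{2m+3}`. -/
def mIndep (m : ℕ) (x : ℝ) : ℝ := (1 + 2 * x) ^ (m + 1) + x * (1 + x) ^ m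

theorem cycleIndep_add_three (x : ℝ) (k : ℕ) :
    cycleIndep x (k + 3) = pathIndep x (k + 2) + x * pathIndep x k := by
  induction k using Nat.twoStepInduction with
  | zero => simp only [cycleIndep, pathIndep]; ring
  | one => simp only [cycleIndep, pathIndep]; ring
  | more k ih₀ ih₁ =>
    rw [cycleIndep, ih₀, ih₁, pathIndep.eq_3 x (k + 2), pathIndep.eq_3 x k]
    ring

theorem mIndep_succ (m : ℕ) (x : ℝ) :
    mIndep (m + 1) x = (1 + x) * mIndep m x + x * (1 + 2 * x) ^ (m + 1) := by
  unfold mIndep; ring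

section

variable {a : ℕ → ℝ} (hrec : ∀ k, a (k + 2) = a (k + 1) + x * a k)
  (hx : -(1 / 4) ≤ x) (hx0 : x ≤ 0) (ha : 0 < a 0) (ha₀ : a 0 ≤ 2 * a 1)
  (ha₁ : a 1 ≤ (1 + x) * a 0)

include hrec hx hx0 ha ha₀ ha₁

theorem pos_and_le_of_recursion (k : ℕ) :
    0 < a k ∧ a k ≤ 2 * a (k + 1) ∧ a (k + 1) ≤ (1 + x) * a k := by
  induction k with
  | zero => exact ⟨ha, ha₀, ha₁⟩
  | succ k ih =>
    obtain ⟨hpos, hle₀, hle₁⟩ := ih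
    have hanti : a (k + 1) ≤ a k := hle₁.trans (mul_le_of_le_one_left hpos.le (by linarith))
    rw [show k + 1 + 1 = k + 2 from rfl, hrec k]
    refine ⟨by linarith, by nlinarith, ?_⟩
    linarith [mul_le_mul_of_nonpos_left hanti hx0]

theorem le_pow_mul_of_recursion (r k : ℕ) : a (r + 2 * k) ≤ (1 + 2 * x) ^ k * a r := by
  induction k with
  | zero => simp
  | succ k ih =>
    have hle := (pos_and_le_of_recursion hrec hx hx0 ha ha₀ ha₁ (r + 2 * k)).2.2
    calc a (r + 2 * (k + 1)) = a (r + 2 * k + 1) + x * a (r + 2 * k) := hrec _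
      _ ≤ (1 + 2 * x) * a (r + 2 * k) := by linarith
      _ ≤ (1 + 2 * x) * ((1 + 2 * x) ^ k * a r) := by gcongr; linarith
      _ = (1 + 2 * x) ^ (k + 1) * a r := by ring

end

theorem pathIndep_le_pow_mul (hx : -(1 / 4) ≤ x) (hx0 : x ≤ 0) (r k : ℕ) :
    pathIndep x (r + 2 * k) ≤ (1 + 2 * x) ^ k * pathIndep x r :=
  le_pow_mul_of_recursion (fun _ => rfl) hx hx0 one_pos (by simp only [pathIndep]; linarith)
    (by simp only [pathIndep]; linarith) r k

theorem cycleIndep_le_pow_mul (hx : -(1 / 4) ≤ x) (hx0 : x ≤ 0) (r k : ℕ) :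
    cycleIndep x (r + 2 * k) ≤ (1 + 2 * x) ^ k * cycleIndep x r :=
  le_pow_mul_of_recursion (fun _ => rfl) hx hx0 two_pos (by simp only [cycleIndep]; linarith)
    (by simp only [cycleIndep]; linarith) r k

theorem PosOn.neg_half_lt {m : ℕ} (h : PosOn (mIndep m) x) : -(1 / 2) < x := by
  by_contra! hle
  have hpos : 0 < mIndep m (-(1 / 2)) := h _ ⟨hle, by norm_num⟩
  have heval : mIndep m (-(1 / 2)) = -(1 / 2) * (1 / 2) ^ m := by norm_num [mIndep]
  have : (0 : ℝ) < (1 / 2) ^ m := by positivity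
  linarith

theorem PosOn.of_mIndep_succ {m : ℕ} (h : PosOn (mIndep (m + 1)) x) : PosOn (mIndep m) x := by
  intro y hy
  have hy2 := (h.mono hy.1).neg_half_lt
  have heq : (1 + 2 * y) * mIndep m y = mIndep (m + 1) y + y ^ 2 * (1 + y) ^ m := by
    unfold mIndep; ring
  have hprod : 0 < (1 + 2 * y) * mIndep m y := by
    have hpow : 0 < (1 + y) ^ m := pow_pos (by linarith) m
    rw [heq]
    exact add_pos_of_pos_of_nonneg (h y hy) (by positivity)
  exact pos_of_mul_pos_right hprod (by linarith)

/-- The intervals on which the polynomials of `M_7, M_9, …` are positive decrease, and that of `M_7`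
is negative at `-1/4`. -/
theorem PosOn.neg_quarter_le {m : ℕ} (h : PosOn (mIndep (m + 2)) x) : -(1 / 4) ≤ x := by
  induction m with
  | zero =>
    by_contra! hlt
    have := h (-(1 / 4)) ⟨hlt.le, by norm_num⟩
    norm_num [mIndep] at this
  | succ m ih => exact ih h.of_mIndep_succ

theorem mIndep_le_cycleIndep {m : ℕ} (hx0 : x ≤ 0) (h : PosOn (mIndep m) x) :
    mIndep m x ≤ cycleIndep x (2 * m + 3) := by
  match m with
  | 0 | 1 => exact le_of_eq (by simp only [mIndep, cycleIndep]; ring)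
  | m + 2 =>
    have hx := h.neg_quarter_le
    clear h
    induction m + 2 with
    | zero => exact le_of_eq (by simp only [mIndep, cycleIndep]; ring)
    | succ m ih =>
      have hle : cycleIndep x (2 * m + 2) ≤ (1 + 2 * x) ^ (m + 1) := by
        refine (add_comm 2 (2 * m) ▸ cycleIndep_le_pow_mul hx hx0 2 m).trans_eq ?_
        simp only [cycleIndep]; ring
      calc mIndep (m + 1) x = (1 + x) * mIndep m x + x * (1 + 2 * x) ^ (m + 1) := mIndep_succ m x
        _ ≤ (1 + x) * cycleIndep x (2 * m + 3) + x * cycleIndep x (2 * m + 2) :=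
          add_le_add (mul_le_mul_of_nonneg_left ih (by linarith))
            (mul_le_mul_of_nonpos_left hle hx0)
        _ = cycleIndep x (2 * m + 5) := by
          rw [cycleIndep.eq_3 x (2 * m + 3), cycleIndep.eq_3 x (2 * m + 2)]; ring

theorem pathIndep_le_pow {m : ℕ} (hx0 : x ≤ 0) (h : PosOn (mIndep m) x) :
    pathIndep x (2 * m + 2) ≤ (1 + 2 * x) ^ (m + 1) := by
  match m with
  | 0 => exact le_of_eq (by simp only [pathIndep]; ring)
  | 1 => simp only [pathIndep]; ring_nf; nlinarith [sq_nonneg x]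
  | m + 2 =>
    simpa [pathIndep, mul_add] using pathIndep_le_pow_mul h.neg_quarter_le hx0 0 (m + 3)

theorem one_add_mul_cycleIndep_le_pow {m : ℕ} (hx0 : x ≤ 0) (h : PosOn (mIndep m) x) :
    (1 + x) * cycleIndep x (2 * m + 3) ≤ (1 + 2 * x) ^ (m + 2) := by
  have hx2 := h.neg_half_lt
  match m with
  | 0 => simp only [cycleIndep]; ring_nf; nlinarith [sq_nonneg x]
  | 1 =>
    have : 0 ≤ x ^ 2 * (2 + 3 * x) := mul_nonneg (sq_nonneg x) (by linarith)
    simp only [cycleIndep]; ring_nf; nlinarith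
  | m + 2 =>
    calc (1 + x) * cycleIndep x (2 * (m + 2) + 3)
        ≤ (1 + x) * ((1 + 2 * x) ^ (m + 2) * cycleIndep x 3) := by
          rw [add_comm _ 3]
          gcongr
          · linarith
          · exact cycleIndep_le_pow_mul h.neg_quarter_le hx0 3 (m + 2)
      _ = (1 + 2 * x) ^ (m + 2) * ((1 + x) * (1 + 3 * x)) := by simp only [cycleIndep]; ring
      _ ≤ (1 + 2 * x) ^ (m + 2) * (1 + 2 * x) ^ 2 := by
          refine mul_le_mul_of_nonneg_left ?_ (pow_nonneg (by linarith) _)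
          nlinarith [sq_nonneg x]
      _ = (1 + 2 * x) ^ (m + 2 + 2) := (pow_add _ _ _).symm

end Recursions

/-! ### Acyclic graphs, paths and cycles -/

section PathsAndCycles

open Finset

universe u

variable {V : Type u} {G : SimpleGraph V} {x : ℝ}

theorem indepSum_induce {s : Set V} {T : Finset s} {S : Finset V}
    (hS : ∀ v ∈ S, v ∈ s) (hT : ∀ v : s, v ∈ T ↔ ↑v ∈ S) :
    indepSum (G.induce s) T x = indepSum G S x := by
  rw [← indepSum_map (Embedding.induce s) T x]
  congr 1
  ext v
  simpa [hT] using hS v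

section Degree

variable [Fintype V] [DecidableRel G.Adj] {s : Set V} [DecidablePred (· ∈ s)]

theorem map_neighborFinset_induce_subset (v : s) :
    ((G.induce s).neighborFinset v).map (.subtype (· ∈ s)) ⊆ G.neighborFinset v := by
  simp +contextual [subset_iff]

theorem degree_induce_le (v : s) : (G.induce s).degree v ≤ G.degree v := by
  simpa only [card_map, card_neighborFinset_eq_degree] using
    card_le_card (map_neighborFinset_induce_subset v)

theorem degree_induce_lt {v : s} {w : V} (hvw : G.Adj v w) (hw : w ∉ s) :
    (G.induce s).degree v < G.degree v := by
  simpa only [card_map, card_neighborFinset_eq_degree] using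
    card_lt_card (ssubset_iff_of_subset (map_neighborFinset_induce_subset v) |>.2
      ⟨w, by simpa using hvw, by simp [hw]⟩)

end Degree

/-- A cycle inside `s` would use all edges of `G` at its vertices, hence be a component of `G`. -/
theorem isAcyclic_induce_of_degree_le_two [Fintype V] [DecidableRel G.Adj] {s : Set V}
    (hG : G.Connected) (hs : s ≠ Set.univ) (hdeg : ∀ v ∈ s, G.degree v ≤ 2) :
    (G.induce s).IsAcyclic := by
  intro a p hp
  let q := p.map (Embedding.induce s).toHom
  have hq : q.IsCycle := hp.map Subtype.val_injective
  have hsub (v) (hv : v ∈ q.support) : v ∈ s := by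
    obtain ⟨w, -, rfl⟩ := List.mem_map.1 (Walk.support_map .. ▸ hv)
    exact w.2
  have hclosed (v w) (hv : v ∈ q.support) (hvw : G.Adj v w) : w ∈ q.support := by
    have hnbrs : q.toSubgraph.neighborSet v = G.neighborSet v := by
      refine Set.eq_of_subset_of_ncard_le (Subgraph.neighborSet_subset _ v) ?_ (Set.toFinite _)
      rw [hq.ncard_neighborSet_toSubgraph_eq_two hv, ← Nat.card_coe_set_eq,
        Nat.card_eq_fintype_card, card_neighborSet_eq_degree]
      exact hdeg v (hsub v hv)
    have hadj : w ∈ q.toSubgraph.neighborSet v := hnbrs ▸ hvw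
    exact (Walk.mem_verts_toSubgraph q).1 hadj.snd_mem
  obtain ⟨b, hb⟩ := (Set.ne_univ_iff_exists_notMem s).1 hs
  obtain ⟨r⟩ := hG.preconnected a b
  obtain ⟨d, -, hfst, hsnd⟩ :=
    r.exists_boundary_dart {v | v ∈ q.support} q.start_mem_support fun h => hb (hsub b h)
  exact hsnd (hclosed _ _ hfst d.adj)

theorem isTree_of_isAcyclic_of_card [Fintype V] [Nonempty V] [Fintype G.edgeSet]
    (hG : G.IsAcyclic) (hcard : #G.edgeFinset + 1 = Fintype.card V) : G.IsTree := by
  classical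
  obtain ⟨T, hGT, -, hT⟩ := connected_top.exists_isTree_le_of_le_of_isAcyclic le_top hG
  have hle : #T.edgeFinset ≤ #G.edgeFinset := by
    have := hT.card_edgeFinset
    omega
  rwa [edgeFinset_inj.1 (eq_of_subset_of_card_le (edgeFinset_mono hGT) hle)]

variable [Fintype V] [DecidableRel G.Adj]

theorem card_coe_compl_singleton [DecidableEq V] (v : V) :
    Fintype.card ({v}ᶜ : Set V) = Fintype.card V - 1 := by
  rw [Fintype.card_compl_set, Set.card_singleton]

theorem card_edgeFinset_induce_compl_singleton_eq_sub [DecidableEq V] (v : V) :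
    #(G.induce {v}ᶜ).edgeFinset = #G.edgeFinset - G.degree v := by
  rw [SimpleGraph.card_edgeFinset_induce_compl_singleton, card_edgeFinset_deleteIncidenceSet]

theorem connected_induce_compl_singleton_of_degree_eq_two [Nontrivial V] (hG : G.Connected)
    (hdeg : ∀ v, G.degree v = 2) (v : V) : (G.induce {v}ᶜ).Connected := by
  classical
  have hacyclic : (G.induce {v}ᶜ).IsAcyclic :=
    isAcyclic_induce_of_degree_le_two hG (by simp) fun w _ => (hdeg w).le
  have hedges : #G.edgeFinset = Fintype.card V := by
    have := G.sum_degrees_eq_twice_card_edges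
    simp only [hdeg, sum_const, card_univ, smul_eq_mul] at this
    omega
  have : Nonempty ({v}ᶜ : Set V) := nonempty_subtype.2 (exists_ne v)
  refine (isTree_of_isAcyclic_of_card hacyclic ?_).connected
  rw [card_edgeFinset_induce_compl_singleton_eq_sub, card_coe_compl_singleton, hedges, hdeg]
  have := Fintype.card_pos (α := ({v}ᶜ : Set V))
  rw [card_coe_compl_singleton] at this
  omega

variable [DecidableEq V]

theorem indepSum_univ_eq_pathIndep {n : ℕ} (hG : G.Connected) (hcard : Fintype.card V = n + 1)
    (hdeg : ∀ v, G.degree v ≤ 2) {v : V} (hv : G.degree v ≤ 1) :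
    indepSum G univ x = pathIndep x (n + 1) ∧ indepSum G (univ.erase v) x = pathIndep x n := by
  induction n generalizing V with
  | zero =>
    have : Subsingleton V := Fintype.card_le_one_iff_subsingleton.1 hcard.le
    have huniv : (univ : Finset V) = insert v ∅ := by ext w; simp [Subsingleton.elim w v]
    rw [huniv, erase_insert (notMem_empty v),
      indepSum_insert (T := ∅) (notMem_empty v) (by simp), indepSum_empty]
    simp [pathIndep]
  | succ n ih =>
    have : Nontrivial V := Fintype.one_lt_card_iff_nontrivial.1 (by omega)
    have hv1 : G.degree v = 1 := hv.antisymm (hG.preconnected.degree_pos_of_nontrivial v)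
    obtain ⟨w, hvw, hw⟩ := degree_eq_one_iff_existsUnique_adj.1 hv1
    let w' : ({v}ᶜ : Set V) := ⟨w, hvw.ne'⟩
    have hw' : (G.induce {v}ᶜ).degree w' ≤ 1 :=
      Nat.le_of_lt_succ ((degree_induce_lt (v := w') hvw.symm (by simp)).trans_le (hdeg w))
    obtain ⟨hpath, herase⟩ := ih (hG.induce_compl_singleton_of_degree_eq_one hv1)
      (by rw [card_coe_compl_singleton]; omega) (fun u => (degree_induce_le u).trans (hdeg u)) hw'
    rw [indepSum_induce (S := univ.erase v) (by simp) (by simp)] at hpath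
    rw [indepSum_induce (S := (univ.erase v).erase w) (by simp)
      (by simp +contextual [w', Subtype.ext_iff])] at herase
    refine ⟨?_, hpath⟩
    have hadj (u) : G.Adj v u ↔ u = w := ⟨hw u, fun h => h ▸ hvw⟩
    rw [← insert_erase (mem_univ v), indepSum_insert (notMem_erase v _)
      (T := (univ.erase v).erase w) (by simp [hadj, and_comm]), hpath, herase, pathIndep]

theorem indepSum_erase_erase_eq_pathIndep {n : ℕ} (hG : G.Connected)
    (hcard : Fintype.card V = n + 2) (hdeg : ∀ v, G.degree v ≤ 2) {a b : V} (hab : a ≠ b)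
    (ha : G.degree a ≤ 1) (hb : G.degree b ≤ 1) :
    indepSum G ((univ.erase a).erase b) x = pathIndep x n := by
  have : Nontrivial V := ⟨a, b, hab⟩
  have ha1 : G.degree a = 1 := ha.antisymm (hG.preconnected.degree_pos_of_nontrivial a)
  let b' : ({a}ᶜ : Set V) := ⟨b, hab.symm⟩
  rw [← indepSum_induce (T := univ.erase b') (by simp)
    (by simp +contextual [b', Subtype.ext_iff])]
  exact (indepSum_univ_eq_pathIndep (hG.induce_compl_singleton_of_degree_eq_one ha1)
    (by rw [card_coe_compl_singleton]; omega) (fun u => (degree_induce_le u).trans (hdeg u))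
    ((degree_induce_le b').trans hb)).2

theorem indepSum_eq_cycleIndep {n : ℕ} (hG : G.Connected) (hcard : Fintype.card V = n + 3)
    (hdeg : ∀ v, G.degree v = 2) (v : V) :
    indepSum G univ x = cycleIndep x (n + 3) ∧
      indepSum G (univ.erase v) x = pathIndep x (n + 2) := by
  have : Nontrivial V := Fintype.one_lt_card_iff_nontrivial.1 (by omega)
  have hconn := connected_induce_compl_singleton_of_degree_eq_two hG hdeg v
  obtain ⟨a, b, hab, hnbrs⟩ := card_eq_two.1 (hdeg v)
  have hadj (w) : G.Adj v w ↔ w = a ∨ w = b := by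
    rw [← mem_neighborFinset, hnbrs, mem_insert, mem_singleton]
  let a' : ({v}ᶜ : Set V) := ⟨a, ((hadj a).2 (.inl rfl)).ne'⟩
  let b' : ({v}ᶜ : Set V) := ⟨b, ((hadj b).2 (.inr rfl)).ne'⟩
  have hend (w : ({v}ᶜ : Set V)) (hw : G.Adj v w) : (G.induce {v}ᶜ).degree w ≤ 1 :=
    Nat.le_of_lt_succ ((degree_induce_lt hw.symm (by simp)).trans_eq (hdeg w))
  have ha := hend a' ((hadj a).2 (.inl rfl))
  have hb := hend b' ((hadj b).2 (.inr rfl))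
  have hdeg' (w : ({v}ᶜ : Set V)) : (G.induce {v}ᶜ).degree w ≤ 2 :=
    (degree_induce_le w).trans_eq (hdeg w)
  have hcard' : Fintype.card ({v}ᶜ : Set V) = n + 2 := by rw [card_coe_compl_singleton]; omega
  have hpath := (indepSum_univ_eq_pathIndep (x := x) hconn hcard' hdeg' ha).1
  have hpath₂ := indepSum_erase_erase_eq_pathIndep (x := x) hconn hcard' hdeg'
    (Subtype.coe_ne_coe.1 hab) ha hb
  rw [indepSum_induce (S := univ.erase v) (by simp) (by simp)] at hpath
  rw [indepSum_induce (S := ((univ.erase v).erase a).erase b) (by simp)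
    (by simp +contextual [a', b', Subtype.ext_iff])] at hpath₂
  refine ⟨?_, hpath⟩
  rw [← insert_erase (mem_univ v), indepSum_insert (notMem_erase v _)
    (T := ((univ.erase v).erase a).erase b) (by simp [hadj, and_comm, and_assoc]), hpath, hpath₂,
    cycleIndep_add_three]

end PathsAndCycles

/-! ### Quasi-regularizable graphs -/

section QuasiRegularizable

open Finset

variable {V : Type*} {G : SimpleGraph V}

/-- Berge's quasi-regularizable graphs: every independent set `T` has at least `|T|` neighbours.
Instead of the neighbourhood of `T` the condition mentions the finite sets `N` containing it. -/
def IsQuasiRegularizable (G : SimpleGraph V) : Prop :=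
  ∀ T N : Finset V, IsIndepFinset G T → (∀ v ∈ T, ∀ w, G.Adj v w → w ∈ N) → #T ≤ #N

theorem WellCovered.card_le_card_of_maximal {A B : Finset V} [Finite V] (hG : WellCovered G)
    (hA : IsIndepFinset G A) (hB : Maximal (IsIndepFinset G) B) : #A ≤ #B := by
  classical
  obtain ⟨C, hAC, hC⟩ := Finite.exists_le_maximal hA
  refine (Finset.card_le_card hAC).trans_eq (hG C B hC.prop ?_ hB.prop ?_)
  · exact fun v hv h => hC.not_prop_of_gt (by convert ssubset_insert hv) h
  · exact fun v hv h => hB.not_prop_of_gt (by convert ssubset_insert hv) h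

/-- A maximal independent set `B` through a neighbour of `T` gives `|T \ B| ≤ |N ∩ B|`, since
`T ∪ (B \ N)` is independent. Induction covers `T ∩ B`, whose neighbours lie in `N \ B`. -/
theorem WellCovered.isQuasiRegularizable [Finite V] (hG : WellCovered G)
    (hadj : ∀ v, ∃ w, G.Adj v w) : IsQuasiRegularizable G := by
  classical
  intro T
  induction T using Finset.strongInduction with
  | H T ih =>
    intro N hT hN
    obtain rfl | ⟨t, ht⟩ := T.eq_empty_or_nonempty
    · simp
    obtain ⟨v, htv⟩ := hadj t
    have hv : IsIndepFinset G {v} := by simp [IsIndepFinset]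
    obtain ⟨B, hvB, hB⟩ := Finite.exists_le_maximal hv
    have htB : t ∉ B := fun h => hB.prop t h v (singleton_subset_iff.1 hvB) htv
    have hinter : #(T ∩ B) ≤ #(N \ B) := by
      refine ih _ (inter_subset_left.ssubset_of_not_subset fun h => htB (mem_inter.1 (h ht)).2) _
        (fun a ha b hb => hT a (mem_inter.1 ha).1 b (mem_inter.1 hb).1) fun a ha w haw => ?_
      rw [mem_inter] at ha
      exact mem_sdiff.2 ⟨hN a ha.1 w haw, fun hw => hB.prop a ha.2 w hw haw⟩
    have hindep : IsIndepFinset G ((T \ B) ∪ (B \ N)) := by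
      intro a ha b hb hab
      simp only [mem_union, mem_sdiff] at ha hb
      grind [hT a, hB.prop a, hN a, hN b, G.adj_comm]
    have hsdiff : #(T \ B) + #(B \ N) ≤ #B := by
      rw [← card_union_of_disjoint (disjoint_sdiff_self_left.mono_right sdiff_subset)]
      exact hG.card_le_card_of_maximal hindep hB
    have hT' := card_sdiff_add_card_inter T B
    have hN' := card_sdiff_add_card_inter N B
    have hB' := card_sdiff_add_card_inter B N
    rw [inter_comm B N] at hB'
    omega

theorem IsQuasiRegularizable.two_mul_card_le [Fintype V] {T : Finset V}
    (hG : IsQuasiRegularizable G) (hT : IsIndepFinset G T) : 2 * #T ≤ Fintype.card V := by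
  classical
  have := hG T Tᶜ hT fun v hv w hvw => mem_compl.2 fun hw => hT v hv w hw hvw
  have := card_add_card_compl T
  omega

/-- The larger colour class of a 2-colouring. -/
theorem exists_isIndepFinset_of_isAcyclic_induce (R : Finset V) (hR : (G.induce R).IsAcyclic) :
    ∃ I ⊆ R, IsIndepFinset G I ∧ #R ≤ 2 * #I := by
  classical
  obtain ⟨C⟩ := hR.colorable_two
  obtain ⟨c, hc⟩ : ∃ c, #R ≤ 2 * #{v | C v = c} := by
    have hsum := card_eq_sum_card_fiberwise (f := C) (s := univ) (t := univ) (by simp)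
    rw [Fin.sum_univ_two, card_univ, show Fintype.card (R : Set V) = #R from Fintype.card_coe R]
      at hsum
    by_contra! h
    have := h 0
    have := h 1
    omega
  refine ⟨({v | C v = c} : Finset (R : Set V)).map (.subtype _), ?_, ?_, by rwa [card_map]⟩
  · simp +contextual [subset_iff]
  · simp only [IsIndepFinset, mem_map, mem_filter, mem_univ, true_and]
    rintro _ ⟨u, hu, rfl⟩ _ ⟨v, hv, rfl⟩ huv
    exact C.valid (v := u) (w := v) huv (hu.trans hv.symm)

end QuasiRegularizable

/-! ### Leaves of unicyclic graphs -/

section Unicyclic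

open Finset

variable {V : Type*} [Fintype V] {G : SimpleGraph V}

theorem Unicyclic.card_edgeFinset [DecidableRel G.Adj] (hG : Unicyclic G) :
    #G.edgeFinset = Fintype.card V := by
  rw [← hG.2, ← coe_edgeFinset, Set.ncard_coe_finset]

theorem Unicyclic.two_lt_card (hG : Unicyclic G) : 2 < Fintype.card V := by
  classical
  have hle := G.card_edgeFinset_le_card_choose_two
  have := hG.1.nonempty
  have := Fintype.card_pos (α := V)
  rw [hG.card_edgeFinset] at hle
  by_contra! h
  interval_cases Fintype.card V <;> simp [Nat.choose] at hle

variable [DecidableRel G.Adj]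

theorem Unicyclic.sum_degrees (hG : Unicyclic G) : ∑ v, G.degree v = 2 * Fintype.card V := by
  rw [G.sum_degrees_eq_twice_card_edges, hG.card_edgeFinset]

theorem Unicyclic.degree_pos (hG : Unicyclic G) (v : V) : 0 < G.degree v :=
  have : Nontrivial V := Fintype.one_lt_card_iff_nontrivial.1 (one_lt_two.trans hG.two_lt_card)
  hG.1.preconnected.degree_pos_of_nontrivial v

theorem Unicyclic.degree_eq_two_of_forall_ne_one (hG : Unicyclic G) (hleaf : ∀ v, G.degree v ≠ 1)
    (v : V) : G.degree v = 2 := by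
  have hle (w) (_ : w ∈ univ) : 2 ≤ G.degree w := by
    have := hG.degree_pos w
    have := hleaf w
    omega
  refine ((sum_eq_sum_iff_of_le hle).1 ?_ v (mem_univ v)).symm
  rw [hG.sum_degrees, sum_const, card_univ, smul_eq_mul, mul_comm]

theorem Unicyclic.induce_compl_singleton [DecidableEq V] (hG : Unicyclic G) {v : V}
    (hv : G.degree v = 1) : Unicyclic (G.induce {v}ᶜ) := by
  refine ⟨hG.1.induce_compl_singleton_of_degree_eq_one hv, ?_⟩
  rw [← coe_edgeFinset, Set.ncard_coe_finset, card_edgeFinset_induce_compl_singleton_eq_sub,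
    hG.card_edgeFinset, hv, card_coe_compl_singleton]

theorem Unicyclic.not_adj_of_degree_eq_one (hG : Unicyclic G) {a b : V} (ha : G.degree a = 1)
    (hb : G.degree b = 1) : ¬ G.Adj a b := by
  classical
  intro hab
  have hpos := (hG.induce_compl_singleton ha).degree_pos ⟨b, hab.ne'⟩
  have hlt := degree_induce_lt (s := {a}ᶜ) (v := ⟨b, hab.ne'⟩) hab.symm (by simp)
  exact hlt.not_ge (hb.trans_le hpos)

section Leaves

variable {L Q : Finset V} (hL : ∀ v, v ∈ L ↔ G.degree v = 1)
  (hQ : ∀ v, v ∈ Q ↔ ∃ l ∈ L, G.Adj l v)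

include hL

theorem Unicyclic.isIndepFinset_leaves (hG : Unicyclic G) : IsIndepFinset G L :=
  fun _ hu _ hv => hG.not_adj_of_degree_eq_one ((hL _).1 hu) ((hL _).1 hv)

include hQ

theorem Unicyclic.disjoint_leaves_supports (hG : Unicyclic G) : Disjoint L Q := by
  refine disjoint_left.2 fun v hvL hvQ => ?_
  obtain ⟨l, hl, hlv⟩ := (hQ v).1 hvQ
  exact hG.isIndepFinset_leaves hL l hl v hvL hlv

/-- As the degrees sum to `2|V|`, having `|L| ≤ |Q|` and degree at least `3` on `Q` forces equality
everywhere. -/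
theorem Unicyclic.card_leaves_eq_card_supports (hG : Unicyclic G) (hqr : IsQuasiRegularizable G)
    (hdeg : ∀ v ∈ Q, G.degree v ≠ 2) :
    #L = #Q ∧ ∀ v, v ∉ L → v ∉ Q → G.degree v = 2 := by
  classical
  have hLQ : #L ≤ #Q := hqr L Q (hG.isIndepFinset_leaves hL)
    fun l hl v hlv => (hQ v).2 ⟨l, hl, hlv⟩
  have hle (v) (_ : v ∈ univ) :
      2 + (if v ∈ Q then 1 else 0) ≤ G.degree v + (if v ∈ L then 1 else 0) := by
    have hpos := hG.degree_pos v
    have hQL : v ∈ Q → v ∉ L := fun h => disjoint_right.1 (hG.disjoint_leaves_supports hL hQ) h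
    have hQ2 := hdeg v
    rw [hL] at hQL
    split_ifs <;> grind
  have hsumQ : ∑ v, (2 + if v ∈ Q then 1 else 0) = 2 * Fintype.card V + #Q := by
    simp [sum_add_distrib, mul_comm]
  have hsumL : ∑ v, (G.degree v + if v ∈ L then 1 else 0) = 2 * Fintype.card V + #L := by
    simp [sum_add_distrib, hG.sum_degrees]
  have hsum := sum_le_sum hle
  refine ⟨by omega, fun v hvL hvQ => ?_⟩
  have hv := (sum_eq_sum_iff_of_le hle).1 (by omega) v (mem_univ v)
  simpa only [hvL, hvQ, if_false, add_zero, eq_comm] using hv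

/-- The remaining vertices induce paths, which have an independent set `I` of at least half their
number; as `L ∪ I` is independent it has at most `|V| / 2` elements, so that `|V| = 2|L ∪ I|`. -/
theorem Unicyclic.even_card (hG : Unicyclic G) (hqr : IsQuasiRegularizable G) (hne : L.Nonempty)
    (hdeg : ∀ v ∈ Q, G.degree v ≠ 2) : Even (Fintype.card V) := by
  classical
  obtain ⟨hLQ, hdeg2⟩ := hG.card_leaves_eq_card_supports hL hQ hqr hdeg
  obtain ⟨l, hl⟩ := hne
  have hR : (((L ∪ Q)ᶜ : Finset V) : Set V) ≠ Set.univ :=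
    (Set.ne_univ_iff_exists_notMem _).2 ⟨l, by simp [hl]⟩
  obtain ⟨I, hIR, hI, hcard⟩ := exists_isIndepFinset_of_isAcyclic_induce (L ∪ Q)ᶜ <|
    isAcyclic_induce_of_degree_le_two hG.1 hR fun v hv => by
      rw [mem_coe, mem_compl, mem_union, not_or] at hv
      exact (hdeg2 v hv.1 hv.2).le
  have hnotMem (v) (hv : v ∈ I) : v ∉ L ∧ v ∉ Q := by simpa using hIR hv
  have hindep : IsIndepFinset G (L ∪ I) := by
    intro a ha b hb hab
    grind [hG.isIndepFinset_leaves hL a, hI a, G.adj_comm]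
  have hle := hqr.two_mul_card_le hindep
  rw [card_union_of_disjoint (disjoint_right.2 fun v hv => (hnotMem v hv).1)] at hle
  have hsum := card_add_card_compl (L ∪ Q)
  rw [card_union_of_disjoint (hG.disjoint_leaves_supports hL hQ)] at hsum
  exact ⟨#L + #I, by omega⟩

end Leaves

theorem Unicyclic.exists_leaf_of_odd_card (hG : Unicyclic G) (hqr : IsQuasiRegularizable G)
    (hodd : Odd (Fintype.card V)) {v : V} (hv : G.degree v = 1) :
    ∃ l s, G.Adj l s ∧ G.degree l = 1 ∧ G.degree s = 2 := by
  classical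
  by_contra! h
  refine Nat.not_even_iff_odd.2 hodd <| hG.even_card (L := {u | G.degree u = 1})
    (Q := {u | ∃ l ∈ ({u | G.degree u = 1} : Finset V), G.Adj l u}) (by simp)
    (by simp) hqr ⟨v, by simpa using hv⟩ ?_
  simpa using fun s l hl hls => h l s hls hl

end Unicyclic

/-! ### Attaching paths of length two -/

section PathAttachment

open Finset

universe u

variable {V W : Type*} {G : SimpleGraph V} {H : SimpleGraph W} {f : H ↪g G} {u : W} {s l : V}
  {x : ℝ}

/-- `G` arises from its induced subgraph `H` by attaching to the vertex `u` a path of length two,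
with middle vertex `s` and leaf `l`. -/
structure IsPathAttachment (f : H ↪g G) (u : W) (s l : V) : Prop where
  adj_leaf : ∀ w, G.Adj l w ↔ w = s
  adj_support : ∀ w, G.Adj s w ↔ w = l ∨ w = f u
  mem_range : ∀ v, v ∈ Set.range f ↔ v ≠ l ∧ v ≠ s

namespace IsPathAttachment

theorem leaf_ne_support (h : IsPathAttachment f u s l) : l ≠ s :=
  ((h.adj_leaf s).2 rfl).ne

theorem apply_ne_leaf (h : IsPathAttachment f u s l) (w : W) : f w ≠ l :=
  ((h.mem_range _).1 ⟨w, rfl⟩).1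

theorem apply_ne_support (h : IsPathAttachment f u s l) (w : W) : f w ≠ s :=
  ((h.mem_range _).1 ⟨w, rfl⟩).2

theorem isQuasiRegularizable (h : IsPathAttachment f u s l) (hG : IsQuasiRegularizable G) :
    IsQuasiRegularizable H := by
  classical
  intro T N hT hN
  have hlT : l ∉ T.map f.toEmbedding := by simp [h.apply_ne_leaf]
  have hsN : s ∉ N.map f.toEmbedding := by simp [h.apply_ne_support]
  have hle := hG (insert l (T.map f.toEmbedding)) (insert s (N.map f.toEmbedding)) ?_ ?_
  · rw [card_insert_of_notMem hlT, card_insert_of_notMem hsN, card_map, card_map] at hle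
    omega
  · rw [isIndepFinset_insert, isIndepFinset_map]
    exact ⟨by simp [h.adj_leaf, h.apply_ne_support], hT⟩
  · rintro v hv w hvw
    rcases mem_insert.1 hv with rfl | hv
    · exact mem_insert.2 (.inl ((h.adj_leaf w).1 hvw))
    obtain ⟨t, ht, rfl⟩ := mem_map.1 hv
    by_cases hws : w = s
    · exact mem_insert.2 (.inl hws)
    have hwl : w ≠ l := by
      rintro rfl
      exact h.apply_ne_support t ((h.adj_leaf _).1 hvw.symm)
    obtain ⟨w, rfl⟩ := (h.mem_range w).2 ⟨hwl, hws⟩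
    exact mem_insert_of_mem (mem_map_of_mem _ (hN t ht w (f.map_adj_iff.1 hvw)))

section

variable [DecidableEq V]

theorem indepSum_insert_leaf (h : IsPathAttachment f u s l) (S : Finset W) :
    indepSum G (insert l (S.map f.toEmbedding)) x = (1 + x) * indepSum H S x := by
  have hl : l ∉ S.map f.toEmbedding := by simp [h.apply_ne_leaf]
  rw [indepSum_insert hl (T := S.map f.toEmbedding), indepSum_map]
  · ring
  · simp +contextual [h.adj_leaf, h.apply_ne_support]

variable [DecidableEq W]

theorem indepSum_insert_support (h : IsPathAttachment f u s l) (S : Finset W) :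
    indepSum G (insert s (S.map f.toEmbedding)) x
      = indepSum H S x + x * indepSum H (S.erase u) x := by
  have hs : s ∉ S.map f.toEmbedding := by simp [h.apply_ne_support]
  rw [indepSum_insert hs (T := (S.erase u).map f.toEmbedding), indepSum_map, indepSum_map]
  intro w
  rw [h.adj_support]
  simp only [mem_map, mem_erase]
  constructor
  · rintro ⟨w, ⟨hwu, hw⟩, rfl⟩
    exact ⟨⟨w, hw, rfl⟩, not_or.2 ⟨h.apply_ne_leaf w, fun hw => hwu (f.injective hw)⟩⟩
  · rintro ⟨⟨w, hw, rfl⟩, hwu⟩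
    exact ⟨w, ⟨fun hw => hwu (.inr (congrArg f hw)), hw⟩, rfl⟩

theorem indepSum_insert_insert (h : IsPathAttachment f u s l) (S : Finset W) :
    indepSum G (insert l (insert s (S.map f.toEmbedding))) x
      = (1 + x) * indepSum H S x + x * indepSum H (S.erase u) x := by
  have hl : l ∉ insert s (S.map f.toEmbedding) := by simp [h.apply_ne_leaf, h.leaf_ne_support]
  rw [indepSum_insert hl (T := S.map f.toEmbedding), indepSum_insert_support h, indepSum_map]
  · ring
  · intro w
    have hs : s ∉ S.map f.toEmbedding := by simp [h.apply_ne_support]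
    rw [mem_insert, h.adj_leaf]
    grind

end

variable [Fintype V] [Fintype W]

theorem univ_eq [DecidableEq V] (h : IsPathAttachment f u s l) :
    (univ : Finset V) = insert l (insert s (univ.map f.toEmbedding)) := by
  ext v
  have hv := h.mem_range v
  simp only [mem_univ, mem_insert, mem_map, true_and, RelEmbedding.coe_toEmbedding, true_iff]
  rw [← Set.mem_range, hv]
  tauto

theorem card_eq (h : IsPathAttachment f u s l) : Fintype.card V = Fintype.card W + 2 := by
  classical
  rw [← card_univ, h.univ_eq, card_insert_of_notMem, card_insert_of_notMem, card_map, card_univ]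
  · simp [h.apply_ne_support]
  · simp [h.apply_ne_leaf, h.leaf_ne_support]

theorem indepSum_erase_support [DecidableEq V] (h : IsPathAttachment f u s l) :
    indepSum G (univ.erase s) x = (1 + x) * indepSum H univ x := by
  rw [h.univ_eq, Finset.insert_comm,
    erase_insert (by simp [h.apply_ne_support, h.leaf_ne_support.symm]), h.indepSum_insert_leaf]

theorem indepSum_univ [DecidableEq W] (h : IsPathAttachment f u s l) :
    indepSum G univ x = (1 + x) * indepSum H univ x + x * indepSum H (univ.erase u) x := by
  classical
  rw [h.univ_eq, h.indepSum_insert_insert]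

theorem indepSum_erase_leaf [DecidableEq V] [DecidableEq W] (h : IsPathAttachment f u s l) :
    indepSum G (univ.erase l) x = indepSum H univ x + x * indepSum H (univ.erase u) x := by
  rw [h.univ_eq, erase_insert (by simp [h.apply_ne_leaf, h.leaf_ne_support]),
    h.indepSum_insert_support]

theorem indepSum_erase_apply [DecidableEq V] [DecidableEq W] (h : IsPathAttachment f u s l)
    (w : W) :
    indepSum G (univ.erase (f w)) x
      = (1 + x) * indepSum H (univ.erase w) x + x * indepSum H ((univ.erase w).erase u) x := by
  rw [h.univ_eq, erase_insert_of_ne (h.apply_ne_leaf w).symm,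
    erase_insert_of_ne (h.apply_ne_support w).symm, ← h.indepSum_insert_insert, map_erase]
  rfl

end IsPathAttachment

theorem Unicyclic.exists_isPathAttachment {V : Type u} [Fintype V] {G : SimpleGraph V}
    [DecidableRel G.Adj] (hG : Unicyclic G) {l s : V} (hls : G.Adj l s) (hl : G.degree l = 1)
    (hs : G.degree s = 2) :
    ∃ (W : Type u) (_ : Fintype W) (H : SimpleGraph W) (f : H ↪g G) (u : W),
      IsPathAttachment f u s l ∧ Unicyclic H := by
  classical
  have hleaf (w) : G.Adj l w ↔ w = s :=
    ⟨fun h => (degree_eq_one_iff_existsUnique_adj.1 hl).unique h hls, fun h => h ▸ hls⟩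
  obtain ⟨u, hu⟩ : ∃ u, (G.neighborFinset s).erase l = {u} := by
    rw [← card_eq_one, card_erase_of_mem (by simpa using hls.symm), card_neighborFinset_eq_degree,
      hs]
  have hsupp (w) : w ≠ l ∧ G.Adj s w ↔ w = u := by
    rw [← mem_neighborFinset, ← mem_erase, hu, mem_singleton]
  obtain ⟨hul, hsu⟩ := (hsupp u).2 rfl
  let s' : ({l}ᶜ : Set V) := ⟨s, hls.ne'⟩
  have hG' : Unicyclic (G.induce {l}ᶜ) := hG.induce_compl_singleton hl
  have hs' : (G.induce {l}ᶜ).degree s' = 1 := by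
    have hlt := degree_induce_lt (v := s') hls.symm (by simp)
    rw [hs] at hlt
    exact le_antisymm (Nat.le_of_lt_succ hlt) (hG'.degree_pos s')
  refine ⟨_, inferInstance, (G.induce {l}ᶜ).induce {s'}ᶜ,
    (Embedding.induce _).comp (Embedding.induce _), ⟨⟨u, hul⟩, ?_⟩,
    ⟨hleaf, fun w => ?_, fun v => ?_⟩, hG'.induce_compl_singleton hs'⟩
  · exact Subtype.coe_ne_coe.1 hsu.ne'
  · have := hsupp w
    have : G.Adj s l := hls.symm
    change G.Adj s w ↔ w = l ∨ w = u
    grind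
  · refine ⟨?_, fun hv => ⟨⟨⟨v, hv.1⟩, Subtype.coe_ne_coe.1 hv.2⟩, rfl⟩⟩
    rintro ⟨w, rfl⟩
    exact ⟨w.1.2, Subtype.coe_ne_coe.2 w.2⟩

end PathAttachment

/-! ### Bounds for quasi-regularizable unicyclic graphs -/

section Bounds

open Finset

universe u

variable {V : Type u} [Fintype V] [DecidableEq V] {G : SimpleGraph V} {m : ℕ} {x : ℝ}

/-- The induction hypothesis for a graph `G` of order `2m + 3`: besides `I(M_{2m+3}, x) ≤ I(G, x)`,
bounds for `I(G - v, x)` and, from above, for `I(G, x)`, with which the lower bound survives the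
attachment of a path of length two. -/
structure IndepBounds (G : SimpleGraph V) (m : ℕ) (x : ℝ) : Prop where
  lower : mIndep m x ≤ indepSum G univ x
  erase_le : ∀ v, indepSum G (univ.erase v) x ≤ (1 + 2 * x) ^ (m + 1)
  upper : (1 + x) * indepSum G univ x ≤ (1 + 2 * x) ^ (m + 2)

theorem IndepBounds.of_degree_eq_two [DecidableRel G.Adj] (hx : x ≤ 0) (hpos : PosOn (mIndep m) x)
    (hG : G.Connected) (hcard : Fintype.card V = 2 * m + 3) (hdeg : ∀ v, G.degree v = 2) :
    IndepBounds G m x := by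
  have := hG.nonempty
  have hcycle (v) := indepSum_eq_cycleIndep (x := x) hG hcard hdeg v
  have huniv := (hcycle (Classical.arbitrary V)).1
  exact ⟨huniv ▸ mIndep_le_cycleIndep hx hpos, fun v => (hcycle v).2 ▸ pathIndep_le_pow hx hpos,
    huniv ▸ one_add_mul_cycleIndep_le_pow hx hpos⟩

theorem IsPathAttachment.indepBounds {W : Type*} [Fintype W] [DecidableEq W] {H : SimpleGraph W}
    {f : H ↪g G} {u : W} {s l : V} (h : IsPathAttachment f u s l) (hx : x ≤ 0)
    (hx2 : -(1 / 2) < x) (hpos : PosOn (indepSum H univ) x) (hH : IndepBounds H m x) :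
    IndepBounds G (m + 1) x := by
  have hsub {S : Finset W} : 0 ≤ indepSum H S x :=
    (hpos.indepSum_subset (subset_univ S) x (Set.left_mem_Icc.2 hx)).le
  have hle {S T : Finset W} (hST : S ⊆ T) : x * indepSum H S x ≤ x * indepSum H T x :=
    mul_le_mul_of_nonpos_left (indepSum_anti hx (fun _ _ => hsub) hST) hx
  have hmul {a b : ℝ} (hab : a ≤ b) : (1 + 2 * x) * a ≤ (1 + 2 * x) * b :=
    mul_le_mul_of_nonneg_left hab (by linarith)
  have huniv := h.indepSum_univ (x := x)
  refine ⟨?_, fun v => ?_, ?_⟩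
  · calc mIndep (m + 1) x = (1 + x) * mIndep m x + x * (1 + 2 * x) ^ (m + 1) := mIndep_succ m x
      _ ≤ (1 + x) * indepSum H univ x + x * indepSum H (univ.erase u) x :=
        add_le_add (mul_le_mul_of_nonneg_left hH.lower (by linarith))
          (mul_le_mul_of_nonpos_left (hH.erase_le u) hx)
      _ = indepSum G univ x := huniv.symm
  · by_cases hv : v ∈ Set.range f
    · obtain ⟨w, rfl⟩ := hv
      calc indepSum G (univ.erase (f w)) x ≤ (1 + 2 * x) * indepSum H (univ.erase w) x := by
            rw [h.indepSum_erase_apply]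
            linarith [hle (erase_subset u (univ.erase w))]
        _ ≤ (1 + 2 * x) * (1 + 2 * x) ^ (m + 1) := hmul (hH.erase_le w)
        _ = (1 + 2 * x) ^ (m + 1 + 1) := (pow_succ' _ _).symm
    · refine le_trans ?_ hH.upper
      obtain rfl | rfl : v = l ∨ v = s := by
        rw [h.mem_range] at hv
        tauto
      · rw [h.indepSum_erase_leaf]
        linarith [hle (erase_subset u univ)]
      · rw [h.indepSum_erase_support]
  · calc (1 + x) * indepSum G univ x ≤ (1 + x) * ((1 + 2 * x) * indepSum H univ x) := by
          refine mul_le_mul_of_nonneg_left ?_ (by linarith)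
          linarith [hle (erase_subset u univ)]
      _ = (1 + 2 * x) * ((1 + x) * indepSum H univ x) := by ring
      _ ≤ (1 + 2 * x) * (1 + 2 * x) ^ (m + 2) := hmul hH.upper
      _ = (1 + 2 * x) ^ (m + 1 + 2) := (pow_succ' _ _).symm

theorem Unicyclic.indepBounds (hG : Unicyclic G) (hqr : IsQuasiRegularizable G)
    (hcard : Fintype.card V = 2 * m + 3) (hx : x ≤ 0) (hpos : PosOn (mIndep m) x) :
    IndepBounds G m x := by
  classical
  induction m using Nat.strongRec generalizing V x with
  | ind m ih =>
    by_cases hleaf : ∀ v, G.degree v ≠ 1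
    · exact .of_degree_eq_two hx hpos hG.1 hcard (hG.degree_eq_two_of_forall_ne_one hleaf)
    push Not at hleaf
    obtain ⟨v, hv⟩ := hleaf
    obtain ⟨l, s, hls, hl, hs⟩ := hG.exists_leaf_of_odd_card hqr (hcard ▸ ⟨m + 1, by ring⟩) hv
    obtain ⟨W, _, H, f, u, hf, hH⟩ := hG.exists_isPathAttachment hls hl hs
    have hW := hH.two_lt_card
    have hVW := hf.card_eq
    obtain ⟨m, rfl⟩ : ∃ k, m = k + 1 := Nat.exists_eq_add_one.2 (by omega)
    have hbounds (y) (hxy : x ≤ y) (hy : y ≤ 0) : IndepBounds H m y :=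
      ih m m.lt_succ_self hH (hf.isQuasiRegularizable hqr) (by omega) hy
        (hpos.of_mIndep_succ.mono hxy)
    have hHpos : PosOn (indepSum H univ) x := fun y hy =>
      (hpos.of_mIndep_succ y hy).trans_le (hbounds y hy.1 hy.2).lower
    exact hf.indepBounds hx hpos.neg_half_lt hHpos (hbounds x le_rfl hx)

end Bounds

/-! ### The graph `M_n` -/

section MGraph

open Finset

theorem mgraph_adj {n : ℕ} {i j : Fin n} : (Mgraph n).Adj i j ↔ i ≠ j ∧
    (((i.val = 0 ∧ (j.val ≤ 2 ∨ j.val % 2 = 1)) ∨ (i.val = 1 ∧ j.val = 2) ∨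
        (i.val % 2 = 1 ∧ 3 ≤ i.val ∧ j.val = i.val + 1)) ∨
      (j.val = 0 ∧ (i.val ≤ 2 ∨ i.val % 2 = 1)) ∨ (j.val = 1 ∧ i.val = 2) ∨
        (j.val % 2 = 1 ∧ 3 ≤ j.val ∧ i.val = j.val + 1)) :=
  fromRel_adj _ i j

/-- The inclusion of `M_n` into `M_k`, for `n ≤ k`. -/
def mgraphEmbedding {n k : ℕ} (h : n ≤ k) : Mgraph n ↪g Mgraph k where
  toEmbedding := Fin.castLEEmb h
  map_rel_iff' := by simp [mgraph_adj]

theorem val_mgraphEmbedding {n k : ℕ} (h : n ≤ k) (i : Fin n) :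
    (mgraphEmbedding h i).val = i.val :=
  rfl

theorem isPathAttachment_mgraphEmbedding (m : ℕ) :
    IsPathAttachment (mgraphEmbedding (show 2 * m + 3 ≤ 2 * m + 5 by omega)) 0
      ⟨2 * m + 3, by omega⟩ ⟨2 * m + 4, by omega⟩ where
  adj_leaf w := by
    simp only [mgraph_adj, Fin.ext_iff, ne_eq]
    omega
  adj_support w := by
    simp only [mgraph_adj, Fin.ext_iff, ne_eq, val_mgraphEmbedding, Fin.val_zero]
    omega
  mem_range v := by
    simp only [Fin.ext_iff, ne_eq, val_mgraphEmbedding, Set.mem_range]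
    exact ⟨fun ⟨w, hw⟩ => by omega, fun hv => ⟨⟨v, by omega⟩, rfl⟩⟩

theorem mgraph_three : Mgraph 3 = ⊤ := by
  ext i j
  rw [mgraph_adj, top_adj]
  omega

theorem indepSum_mgraph (m : ℕ) (x : ℝ) :
    indepSum (Mgraph (2 * m + 3)) univ x = mIndep m x ∧
      indepSum (Mgraph (2 * m + 3)) (univ.erase 0) x = (1 + 2 * x) ^ (m + 1) := by
  induction m with
  | zero =>
    have h := indepSum_eq_cycleIndep (G := (⊤ : SimpleGraph (Fin 3))) (x := x) (n := 0)
      connected_top rfl (by simp) 0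
    rw [← mgraph_three] at h
    refine ⟨h.1.trans ?_, h.2.trans ?_⟩
    · simp only [cycleIndep, mIndep]; ring
    · simp only [pathIndep]; ring
  | succ m ih =>
    have h := isPathAttachment_mgraphEmbedding m
    have happly : indepSum (Mgraph (2 * m + 5)) (univ.erase 0) x = _ := h.indepSum_erase_apply 0
    refine ⟨h.indepSum_univ.trans ?_, happly.trans ?_⟩
    · rw [ih.1, ih.2, mIndep_succ]
    · rw [erase_idem, ih.2]
      ring

end MGraph

theorem stmt10_general {V : Type*} [Fintype V] {n : ℕ} (hodd : Odd n) {G : SimpleGraph V}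
    (hcard : Fintype.card V = n) (hG : Unicyclic G) (hqr : IsQuasiRegularizable G) :
    Pre G (Mgraph n) := by
  classical
  have hlt := hG.two_lt_card
  obtain ⟨m, rfl⟩ : ∃ m, n = 2 * m + 3 := by
    obtain ⟨k, rfl⟩ := hodd
    exact ⟨k - 1, by omega⟩
  refine pre_of_forall_posOn fun x hx hpos => ?_
  simp only [eval_indepPoly, (indepSum_mgraph m _).1] at hpos ⊢
  exact (hG.indepBounds hqr hcard hx hpos).lower

/-- If `n ≥ 5` is odd and `G` is a connected well-covered unicyclic graph of
order `n`, then `G ⪯ M_n`. -/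
theorem stmt10 {V : Type*} [Fintype V] (n : ℕ) (hn : 5 ≤ n) (hodd : Odd n)
    (G : SimpleGraph V) (hcard : Fintype.card V = n)
    (hG : Unicyclic G) (hwc : WellCovered G) :
    Pre G (Mgraph n) := by
  classical
  exact stmt10_general hodd hcard hG <| hwc.isQuasiRegularizable fun v =>
    (G.degree_pos_iff_exists_adj v).1 (hG.degree_pos v)
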